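/- arXiv:2602.04417 — 6 statements merged into one kernel-verified Lean document; each statement's English description precedes it below -/
import Mathlib

section
/- Let F be an n×n real matrix, g ∈ ℝ^n, α, β ∈ ℝ, and set D := η·I − α·β·F for η ∈ ℝ. Suppose sequences (θ_t) and (δ_t) in ℝ^n satisfy θ_{t+1} = θ_t + α·g − α·β·F·δ_t and δ_{t+1} = D·δ_t + α·g for all t. Then for all t, k ∈ ℕ, θ_{t+k} = θ_t + α·k·g − α·β·F·S_k·δ_t − α²·β·F·M_k·g, where S_k := ∑_{j=0}^{k−1} D^j and M_k := ∑_{j=0}^{k−1} S_j. -/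
open Matrix Finset

/-!
The increment of `θ` is affine in `δ`, so `θ (t + k) - θ t` depends on `δ` only through the sum of
`δ t, …, δ (t + k - 1)`. Since `δ` is an orbit of the affine map `x ↦ D x + α g`, its value after
`k` steps is `D ^ k δ_t + S_k (α g)`; summing over the window turns `D ^ k` into `S_k` and `S_k`
into `M_k`.
-/

theorem apply_add_eq_add_sum_range {V : Type*} [AddCommMonoid V] {x f : ℕ → V}
    (hx : ∀ t, x (t + 1) = x t + f t) (t k : ℕ) :
    x (t + k) = x t + ∑ j ∈ range k, f (t + j) := by
  induction k with
  | zero => simp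
  | succ k ih => rw [← add_assoc, hx, ih, sum_range_succ, add_assoc]

section AffineRecurrence

variable {A V : Type*} [Semiring A] [AddCommMonoid V] [Module A V] {D : A} {u : V} {x : ℕ → V}

theorem affine_recurrence_add (hx : ∀ t, x (t + 1) = D • x t + u) (t k : ℕ) :
    x (t + k) = D ^ k • x t + (∑ j ∈ range k, D ^ j) • u := by
  induction k with
  | zero => simp
  | succ k ih =>
    calc x (t + (k + 1)) = D • (D ^ k • x t + (∑ j ∈ range k, D ^ j) • u) + u := by
          rw [← add_assoc, hx, ih]
      _ = D ^ (k + 1) • x t + ((D * ∑ j ∈ range k, D ^ j) + 1) • u := by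
          rw [smul_add, smul_smul, smul_smul, ← pow_succ', add_smul, one_smul, add_assoc]
      _ = D ^ (k + 1) • x t + (∑ j ∈ range (k + 1), D ^ j) • u := by rw [geom_sum_succ]

theorem sum_range_affine_recurrence (hx : ∀ t, x (t + 1) = D • x t + u) (t k : ℕ) :
    ∑ j ∈ range k, x (t + j) =
      (∑ j ∈ range k, D ^ j) • x t + (∑ j ∈ range k, ∑ i ∈ range j, D ^ i) • u := by
  simp only [affine_recurrence_add hx, sum_add_distrib, ← sum_smul]

end AffineRecurrence

theorem ema_pg_theta_unrolled_general {R A V : Type*} [CommSemiring R] [Semiring A]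
    [AddCommGroup V] [Module R V] [Module A V] [SMulCommClass R A V]
    (F D : A) (g : V) (α β : R) (θ δ : ℕ → V)
    (hθ : ∀ t, θ (t + 1) = θ t + α • g - (α * β) • F • δ t)
    (hδ : ∀ t, δ (t + 1) = D • δ t + α • g) (t k : ℕ) :
    θ (t + k) = θ t + (α * (k : R)) • g
      - (α * β) • F • (∑ j ∈ range k, D ^ j) • δ t
      - (α ^ 2 * β) • F • (∑ j ∈ range k, ∑ i ∈ range j, D ^ i) • g := by
  set S : A := ∑ j ∈ range k, D ^ j
  set M : A := ∑ j ∈ range k, ∑ i ∈ range j, D ^ i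
  have succ_eq_add (s : ℕ) : θ (s + 1) = θ s + (α • g - (α * β) • F • δ s) := by
    rw [hθ, add_sub_assoc]
  have sum_drift : ∑ _j ∈ range k, α • g = (α * (k : R)) • g := by
    rw [sum_const, card_range, mul_comm, mul_smul, Nat.cast_smul_eq_nsmul]
  have sum_feedback : ∑ j ∈ range k, (α * β) • F • δ (t + j) =
      (α * β) • F • S • δ t + (α ^ 2 * β) • F • M • g := by
    calc ∑ j ∈ range k, (α * β) • F • δ (t + j) = (α * β) • F • (S • δ t + M • α • g) := by
          rw [← smul_sum, ← smul_sum, sum_range_affine_recurrence hδ]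
      _ = (α * β) • F • S • δ t + (α ^ 2 * β) • F • M • g := by
          rw [smul_add, smul_add, ← smul_comm α M g, ← smul_comm α F, smul_smul _ α,
            mul_right_comm, ← sq]
  rw [apply_add_eq_add_sum_range succ_eq_add, sum_sub_distrib, sum_drift, sum_feedback]
  abel

/-- With `D = η•I − (α·β)•F`, if `θ_{t+1} = θ_t + α·g − α·β·F·δ_t` and
`δ_{t+1} = D·δ_t + α·g`, then for all `t, k`,
`θ_{t+k} = θ_t + α·k·g − α·β·F·S_k·δ_t − α²·β·F·M_k·g`,
where `S_k = ∑_{j<k} D^j` and `M_k = ∑_{j<k} S_j`. -/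
theorem ema_pg_theta_unrolled
    (n : ℕ) (F : Matrix (Fin n) (Fin n) ℝ) (g : Fin n → ℝ) (α β η : ℝ)
    (D : Matrix (Fin n) (Fin n) ℝ)
    (hD : D = η • (1 : Matrix (Fin n) (Fin n) ℝ) - (α * β) • F)
    (θ δ : ℕ → Fin n → ℝ)
    (hθ : ∀ t : ℕ, θ (t + 1) = θ t + α • g - (α * β) • F.mulVec (δ t))
    (hδ : ∀ t : ℕ, δ (t + 1) = D.mulVec (δ t) + α • g)
    (S M : ℕ → Matrix (Fin n) (Fin n) ℝ)
    (hS : ∀ k : ℕ, S k = ∑ j ∈ Finset.range k, D ^ j)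
    (hM : ∀ k : ℕ, M k = ∑ j ∈ Finset.range k, S j) :
    ∀ t k : ℕ,
      θ (t + k) = θ t + (α * (k : ℝ)) • g
        - (α * β) • F.mulVec ((S k).mulVec (δ t))
        - (α ^ 2 * β) • F.mulVec ((M k).mulVec g) := by
  simp only [hM, hS]
  -- The scoped action `D • v` unfolds to `D *ᵥ v`.
  open Matrix.Module in exact ema_pg_theta_unrolled_general F D g α β θ δ hθ hδ
end

section
/- Let F be an n×n real matrix, v ∈ ℝ^n an eigenvector of F with eigenvalue λ (F·v = λ·v), and let D := η·I − α·β·F, χ := η − α·β·λ with χ ≠ 1. Suppose (δ_t) in ℝ^n satisfies δ_{t+1} = D·δ_t + α·g. Then for all t, k ∈ ℕ, the projection δ_{t+k}^{(v)} := ⟨v, δ_{t+k}⟩ satisfies δ_{t+k}^{(v)} = χ^k·⟨v, δ_t⟩ + α·((1 − χ^k)/(1 − χ))·⟨v, g⟩, where ⟨·,·⟩ is the Euclidean inner product. -/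
open Matrix Finset

/-! Symmetry makes `v` a left eigenvector of `F`, hence of `D` with eigenvalue `χ`; pairing the
vector recurrence with `v` therefore closes up into a scalar affine recurrence, which a geometric
sum solves. -/

section AffineRecurrence

variable {R M : Type*} [AddCommMonoid M] {a : R} {b : M} {u : ℕ → M}

theorem affine_recurrence_eq_geom_sum [Semiring R] [Module R M]
    (hu : ∀ t, u (t + 1) = a • u t + b) (t k : ℕ) :
    u (t + k) = a ^ k • u t + (∑ i ∈ range k, a ^ i) • b := by
  induction k with
  | zero => simp
  | succ k ih =>
    calc u (t + (k + 1))
        = a • (a ^ k • u t + (∑ i ∈ range k, a ^ i) • b) + b := by rw [← add_assoc, hu, ih]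
      _ = a ^ (k + 1) • u t + (a * ∑ i ∈ range k, a ^ i + 1) • b := by
        rw [smul_add, smul_smul, smul_smul, ← pow_succ', add_smul, one_smul, add_assoc]
      _ = a ^ (k + 1) • u t + (∑ i ∈ range (k + 1), a ^ i) • b := by rw [geom_sum_succ]

theorem affine_recurrence_eq_of_ne_one [DivisionRing R] [Module R M] (ha : a ≠ 1)
    (hu : ∀ t, u (t + 1) = a • u t + b) (t k : ℕ) :
    u (t + k) = a ^ k • u t + ((1 - a ^ k) / (1 - a)) • b := by
  rw [affine_recurrence_eq_geom_sum hu, geom_sum_eq ha, ← neg_div_neg_eq, neg_sub, neg_sub]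

end AffineRecurrence

section LeftEigenvector

variable {ι R : Type*} [Fintype ι] {A : Matrix ι ι R} {v : ι → R} {μ : R}

theorem dotProduct_mulVec_of_vecMul_eq_smul [Semiring R]
    (hv : v ᵥ* A = μ • v) (w : ι → R) : v ⬝ᵥ A *ᵥ w = μ * (v ⬝ᵥ w) := by
  rw [dotProduct_mulVec, hv, smul_dotProduct, smul_eq_mul]

theorem vecMul_smul_one_sub_smul [CommRing R] [DecidableEq ι]
    (hv : v ᵥ* A = μ • v) (a b : R) :
    v ᵥ* (a • (1 : Matrix ι ι R) - b • A) = (a - b * μ) • v := by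
  rw [vecMul_sub, vecMul_smul, vecMul_smul, vecMul_one, hv, smul_smul, ← sub_smul]

end LeftEigenvector

theorem ema_pg_modewise_dynamics_general {ι K : Type*} [Fintype ι] [DecidableEq ι] [Field K]
    {F : Matrix ι ι K} {v g : ι → K} {lam : K} (hv : v ᵥ* F = lam • v) {η α β : K}
    {D : Matrix ι ι K} (hD : D = η • (1 : Matrix ι ι K) - (α * β) • F)
    {χ : K} (hχ : χ = η - α * β * lam) (hχ1 : χ ≠ 1)
    {δ : ℕ → ι → K} (hrec : ∀ t, δ (t + 1) = D *ᵥ δ t + α • g) (t k : ℕ) :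
    v ⬝ᵥ δ (t + k)
      = χ ^ k * (v ⬝ᵥ δ t) + α * ((1 - χ ^ k) / (1 - χ)) * (v ⬝ᵥ g) := by
  have hvD : v ᵥ* D = χ • v := by rw [hD, hχ, vecMul_smul_one_sub_smul hv]
  have projected_rec (s : ℕ) : v ⬝ᵥ δ (s + 1) = χ * (v ⬝ᵥ δ s) + α * (v ⬝ᵥ g) := by
    rw [hrec, dotProduct_add, dotProduct_mulVec_of_vecMul_eq_smul hvD, dotProduct_smul,
      smul_eq_mul]
  calc v ⬝ᵥ δ (t + k)
      = χ ^ k * (v ⬝ᵥ δ t) + (1 - χ ^ k) / (1 - χ) * (α * (v ⬝ᵥ g)) :=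
        affine_recurrence_eq_of_ne_one (u := fun s ↦ v ⬝ᵥ δ s) hχ1 projected_rec t k
    _ = χ ^ k * (v ⬝ᵥ δ t) + α * ((1 - χ ^ k) / (1 - χ)) * (v ⬝ᵥ g) := by ring

/-- Let `F` be symmetric with eigenvector `v` (`F·v = λ·v`),
`D = η•I − (α·β)•F`, `χ = η − α·β·λ ≠ 1`, and suppose `δ_{t+1} = D·δ_t + α·g`.
Then the projections `⟨v, δ_{t+k}⟩` satisfy
`⟨v, δ_{t+k}⟩ = χ^k·⟨v, δ_t⟩ + α·((1 − χ^k)/(1 − χ))·⟨v, g⟩`. -/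
theorem ema_pg_modewise_dynamics
    (n : ℕ) (F : Matrix (Fin n) (Fin n) ℝ) (hF : F.IsSymm)
    (v g : Fin n → ℝ) (lam : ℝ) (hv : F.mulVec v = lam • v)
    (η α β : ℝ)
    (D : Matrix (Fin n) (Fin n) ℝ)
    (hD : D = η • (1 : Matrix (Fin n) (Fin n) ℝ) - (α * β) • F)
    (χ : ℝ) (hχ : χ = η - α * β * lam) (hχ1 : χ ≠ 1)
    (δ : ℕ → Fin n → ℝ)
    (hrec : ∀ t : ℕ, δ (t + 1) = D.mulVec (δ t) + α • g) :
    ∀ t k : ℕ,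
      v ⬝ᵥ δ (t + k)
        = χ ^ k * (v ⬝ᵥ δ t) + α * ((1 - χ ^ k) / (1 - χ)) * (v ⬝ᵥ g) := by
  have hvF : v ᵥ* F = lam • v := by rw [← mulVec_transpose, hF.eq, hv]
  exact ema_pg_modewise_dynamics_general hvF hD hχ hχ1 hrec
end

section
/- Let F be an n×n real symmetric positive semidefinite matrix with largest eigenvalue λ_max, η ∈ [0,1), α, β ≥ 0 with α·β·λ_max < 1 + η, and g ∈ ℝ^n. If (δ_t) in ℝ^n satisfies δ_{t+1} = (η·I − α·β·F)·δ_t + α·g for all t, then δ_t converges as t → ∞ to the steady-state lag δ_* := α·((1 − η)·I + α·β·F)^{−1}·g; in particular (1 − η)·I + α·β·F is invertible. -/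
open Matrix Finset

/-! The lag error `δ t - δ_*` is multiplied by `A = η • 1 - (α * β) • F` at each step, so everything
reduces to `A ^ t → 0` pointwise. The eigenvectors of `F` are eigenvectors of `A`, with eigenvalues
`η - α * β * μ` lying in the open unit ball, so `A ^ t` kills each vector of an eigenbasis in the
limit. Invertibility of `1 - A` comes from the same fact: a vector fixed by `A` is fixed by every
`A ^ t`, hence is zero. -/

section LinearIteration

open Filter Topology Module

variable {ι κ R 𝕜 E : Type*}

theorem tendsto_pow_apply_zero_of_eigenbasis [NormedField 𝕜] [AddCommGroup E] [Module 𝕜 E]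
    [TopologicalSpace E] [ContinuousAdd E] [ContinuousSMul 𝕜 E] (b : Basis κ 𝕜 E)
    {f : End 𝕜 E} {μ : κ → 𝕜} (hb : ∀ i, f.HasEigenvector (μ i) (b i)) (hμ : ∀ i, ‖μ i‖ < 1)
    (v : E) : Tendsto (fun t : ℕ => (f ^ t) v) atTop (𝓝 0) := by
  induction b.mem_span v using Submodule.span_induction with
  | mem _ hw =>
    obtain ⟨i, rfl⟩ := hw
    simpa only [(hb i).pow_apply, zero_smul] using
      (tendsto_pow_atTop_nhds_zero_of_norm_lt_one (hμ i)).smul_const (b i)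
  | zero => simp only [map_zero, tendsto_const_nhds]
  | add v w _ _ hv hw => simpa only [map_add, add_zero] using hv.add hw
  | smul c v _ hv => simpa only [map_smul, smul_zero] using hv.const_smul c

theorem isUnit_one_sub_of_tendsto_pow_apply_zero [Field 𝕜] [AddCommGroup E] [Module 𝕜 E]
    [FiniteDimensional 𝕜 E] [TopologicalSpace E] [T2Space E] {f : End 𝕜 E}
    (hf : ∀ v, Tendsto (fun t : ℕ => (f ^ t) v) atTop (𝓝 0)) : IsUnit (1 - f) := by
  rw [LinearMap.isUnit_iff_ker_eq_bot, LinearMap.ker_eq_bot']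
  intro v hv
  have hfix : Function.IsFixedPt f v := (sub_eq_zero.mp hv).symm
  have hpow (t : ℕ) : (f ^ t) v = v := by rw [End.pow_apply, hfix.iterate t]
  exact tendsto_nhds_unique tendsto_const_nhds ((hf v).congr hpow)

theorem tendsto_affine_iteration [Semiring R] [AddCommGroup E] [Module R E] [TopologicalSpace E]
    [ContinuousAdd E] {f : End R E} (hf : ∀ v, Tendsto (fun t : ℕ => (f ^ t) v) atTop (𝓝 0))
    {x : ℕ → E} {p c : E} (hp : f p + c = p) (hx : ∀ t, x (t + 1) = f (x t) + c) :
    Tendsto x atTop (𝓝 p) := by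
  have herr (t : ℕ) : (f ^ t) (x 0 - p) + p = x t := by
    induction t with
    | zero => rw [pow_zero, End.one_apply, sub_add_cancel]
    | succ t ih => rw [hx, ← ih, pow_succ', End.mul_apply, map_add, add_assoc, hp]
  simpa only [herr, zero_add] using (hf (x 0 - p)).add_const p

theorem mulVec_inv_one_sub_add [Fintype ι] [DecidableEq ι] [CommRing R] {A : Matrix ι ι R}
    (hA : IsUnit (1 - A)) (c : ι → R) : A *ᵥ ((1 - A)⁻¹ *ᵥ c) + c = (1 - A)⁻¹ *ᵥ c := by
  have hsolve : (1 - A) *ᵥ ((1 - A)⁻¹ *ᵥ c) = c := by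
    rw [mulVec_mulVec, mul_nonsing_inv _ ((isUnit_iff_isUnit_det _).mp hA), one_mulVec]
  rw [sub_mulVec, one_mulVec] at hsolve
  exact (sub_eq_iff_eq_add'.mp hsolve).symm

theorem isUnit_and_tendsto_affine_iteration_of_eigenbasis [Fintype ι] [DecidableEq ι]
    [NormedField 𝕜] {A : Matrix ι ι 𝕜} (b : Basis κ 𝕜 (ι → 𝕜)) {μ : κ → 𝕜}
    (hb : ∀ i, A *ᵥ b i = μ i • b i) (hμ : ∀ i, ‖μ i‖ < 1) {x : ℕ → ι → 𝕜} {c : ι → 𝕜}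
    (hx : ∀ t, x (t + 1) = A *ᵥ x t + c) :
    IsUnit (1 - A) ∧ Tendsto x atTop (𝓝 ((1 - A)⁻¹ *ᵥ c)) := by
  have hpow : ∀ v, Tendsto (fun t : ℕ => (A.toLin' ^ t) v) atTop (𝓝 0) :=
    tendsto_pow_apply_zero_of_eigenbasis b
      (fun i => ⟨End.mem_eigenspace_iff.mpr (hb i), b.ne_zero i⟩) hμ
  have hunit : IsUnit (1 - A) := by
    rw [← isUnit_toLin'_iff, map_sub, toLin'_one]
    exact isUnit_one_sub_of_tendsto_pow_apply_zero hpow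
  exact ⟨hunit, tendsto_affine_iteration hpow (mulVec_inv_one_sub_add hunit c) hx⟩

theorem ema_pg_steady_state_convergence_general [Fintype ι] [DecidableEq ι] [NormedField 𝕜]
    {F : Matrix ι ι 𝕜} (b : Basis κ 𝕜 (ι → 𝕜)) {μ : κ → 𝕜} (hb : ∀ i, F *ᵥ b i = μ i • b i)
    {η α β : 𝕜} (hμ : ∀ i, ‖η - α * β * μ i‖ < 1) {g : ι → 𝕜} {δ : ℕ → ι → 𝕜}
    (hrec : ∀ t, δ (t + 1) = (η • (1 : Matrix ι ι 𝕜) - (α * β) • F) *ᵥ δ t + α • g) :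
    IsUnit ((1 - η) • (1 : Matrix ι ι 𝕜) + (α * β) • F) ∧
      Tendsto δ atTop (𝓝 (α • (((1 - η) • (1 : Matrix ι ι 𝕜) + (α * β) • F)⁻¹ *ᵥ g))) := by
  have hcompl : (1 - η) • (1 : Matrix ι ι 𝕜) + (α * β) • F =
      1 - (η • (1 : Matrix ι ι 𝕜) - (α * β) • F) := by
    module
  have hb' (i : κ) :
      (η • (1 : Matrix ι ι 𝕜) - (α * β) • F) *ᵥ b i = (η - α * β * μ i) • b i := by
    rw [sub_mulVec, smul_mulVec, smul_mulVec, one_mulVec, hb, smul_smul, sub_smul]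
  rw [hcompl, ← mulVec_smul]
  exact isUnit_and_tendsto_affine_iteration_of_eigenbasis b hb' hμ hrec

end LinearIteration

section HermitianEigenvalues

variable {ι 𝕜 : Type*} [Fintype ι] [DecidableEq ι] [RCLike 𝕜] {F : Matrix ι ι 𝕜} {c : ℝ}

theorem eigenvalues_le_of_mem_upperBounds (hF : F.IsHermitian)
    (hc : c ∈ upperBounds {μ : ℝ | ∃ v : ι → 𝕜, v ≠ 0 ∧ F *ᵥ v = μ • v}) (i : ι) :
    hF.eigenvalues i ≤ c := by
  refine hc ⟨_, ?_, hF.mulVec_eigenvectorBasis i⟩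
  exact (WithLp.ofLp_eq_zero 2).not.mpr (hF.eigenvectorBasis.orthonormal.ne_zero i)

open scoped ComplexOrder in
theorem abs_sub_mul_eigenvalues_lt_one (hF : F.PosSemidef)
    (hc : c ∈ upperBounds {μ : ℝ | ∃ v : ι → 𝕜, v ≠ 0 ∧ F *ᵥ v = μ • v})
    {η s : ℝ} (hη : η < 1) (hs : 0 ≤ s) (hstab : s * c < 1 + η) (i : ι) :
    |η - s * hF.1.eigenvalues i| < 1 := by
  have hlower : 0 ≤ s * hF.1.eigenvalues i := mul_nonneg hs (hF.eigenvalues_nonneg i)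
  have hupper : s * hF.1.eigenvalues i ≤ s * c :=
    mul_le_mul_of_nonneg_left (eigenvalues_le_of_mem_upperBounds hF.1 hc i) hs
  exact abs_lt.mpr ⟨by linarith, by linarith⟩

end HermitianEigenvalues

/-- Let `F` be symmetric PSD with largest eigenvalue `λ_max`,
`η ∈ [0,1)`, `α, β ≥ 0` with `α·β·λ_max < 1 + η`, and `g ∈ ℝⁿ`. If
`δ_{t+1} = (η•I − α·β·F)·δ_t + α·g`, then `δ_t` converges as `t → ∞` to the
steady-state lag `δ_* = α·((1 − η)•I + α·β·F)⁻¹·g`; in particular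
`(1 − η)•I + α·β·F` is invertible. -/
theorem ema_pg_steady_state_convergence
    (n : ℕ) (F : Matrix (Fin n) (Fin n) ℝ) (hF : F.PosSemidef)
    (lamMax : ℝ)
    (hmax : IsGreatest {μ : ℝ | ∃ v : Fin n → ℝ, v ≠ 0 ∧ F.mulVec v = μ • v} lamMax)
    (η α β : ℝ) (hη0 : 0 ≤ η) (hη1 : η < 1) (hα : 0 ≤ α) (hβ : 0 ≤ β)
    (hstab : α * β * lamMax < 1 + η)
    (g : Fin n → ℝ) (δ : ℕ → Fin n → ℝ)
    (hrec : ∀ t : ℕ,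
      δ (t + 1)
        = (η • (1 : Matrix (Fin n) (Fin n) ℝ) - (α * β) • F).mulVec (δ t) + α • g) :
    IsUnit ((1 - η) • (1 : Matrix (Fin n) (Fin n) ℝ) + (α * β) • F) ∧
      Filter.Tendsto δ Filter.atTop
        (nhds (α •
          (((1 - η) • (1 : Matrix (Fin n) (Fin n) ℝ) + (α * β) • F)⁻¹).mulVec g)) :=
  ema_pg_steady_state_convergence_general
    (hF.1.eigenvectorBasis.toBasis.map (WithLp.linearEquiv 2 ℝ (Fin n → ℝ)))
    (by simpa using hF.1.mulVec_eigenvectorBasis)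
    (abs_sub_mul_eigenvalues_lt_one hF hmax.2 hη1 (mul_nonneg hα hβ) hstab) hrec
end

section
/- Let V be a nonempty finite type, and let π : ℝ^d → V → ℝ be a parameterized policy such that for all θ and j, π θ j > 0, ∑_j π θ j = 1, and θ ↦ π θ j is differentiable at θ₀. Let q : V → ℝ satisfy q j > 0 and ∑_j q j = 1. Then the Fréchet derivative at θ₀ of the reverse KL divergence θ ↦ ∑_{j∈V} π θ j · log(π θ j / q j) equals ∑_{j∈V} π θ₀ j · log(π θ₀ j / q j) · D_θ(log(π θ j))|_{θ₀}, where D_θ(log(π θ j))|_{θ₀} denotes the Fréchet derivative at θ₀ of θ ↦ log(π θ j). -/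
open Finset

/-!
The derivative of `t ↦ t * log (t / c)` is `log (t / c) + 1`, so the gradient of the divergence is
`∑ j, (log (π θ₀ j / q j) + 1) • Dπ j`. The `+ 1` terms add up to the derivative of the total mass,
which is constant, and the log-derivative identity `Dπ j = π θ₀ j • D (log π) j` rewrites what is
left in terms of the score.
-/

section TotalMass

variable {𝕜 E F ι : Type*} [NontriviallyNormedField 𝕜] [NormedAddCommGroup E] [NormedSpace 𝕜 E]
  [NormedAddCommGroup F] [NormedSpace 𝕜 F]

theorem sum_hasFDerivAt_eq_zero_of_eventually_sum_eq {s : Finset ι} {f : ι → E → F}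
    {f' : ι → E →L[𝕜] F} {x : E} {c : F} (hf : ∀ i ∈ s, HasFDerivAt (f i) (f' i) x)
    (hsum : ∀ᶠ y in nhds x, ∑ i ∈ s, f i y = c) :
    ∑ i ∈ s, f' i = 0 :=
  (HasFDerivAt.fun_sum hf).unique ((hasFDerivAt_const c x).congr_of_eventuallyEq hsum)

end TotalMass

section Divergence

variable {E ι : Type*} [NormedAddCommGroup E] [NormedSpace ℝ E]

theorem smul_fderiv_log {f : E → ℝ} {x : E} (hf : DifferentiableAt ℝ f x) (hx : f x ≠ 0) :
    f x • fderiv ℝ (fun y => Real.log (f y)) x = fderiv ℝ f x := by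
  rw [fderiv.log hf hx, smul_inv_smul₀ hx]

theorem hasDerivAt_mul_log_div {c t : ℝ} (hc : c ≠ 0) (ht : t ≠ 0) :
    HasDerivAt (fun u => u * Real.log (u / c)) (Real.log (t / c) + 1) t := by
  have hlog : HasDerivAt (fun u => Real.log (u / c)) (1 / c / (t / c)) t :=
    ((hasDerivAt_id t).div_const c).log (div_ne_zero ht hc)
  refine ((hasDerivAt_id t).mul hlog).congr_deriv ?_
  simp only [id_eq]
  field_simp

theorem hasFDerivAt_sum_mul_log_div {s : Finset ι} {p : ι → E → ℝ} {p' : ι → E →L[ℝ] ℝ}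
    {q : ι → ℝ} {x : E} {c : ℝ} (hp : ∀ i ∈ s, HasFDerivAt (p i) (p' i) x)
    (hpx : ∀ i ∈ s, p i x ≠ 0) (hq : ∀ i ∈ s, q i ≠ 0)
    (hsum : ∀ᶠ y in nhds x, ∑ i ∈ s, p i y = c) :
    HasFDerivAt (fun y => ∑ i ∈ s, p i y * Real.log (p i y / q i))
      (∑ i ∈ s, Real.log (p i x / q i) • p' i) x := by
  have hterm : ∀ i ∈ s, HasFDerivAt (fun y => p i y * Real.log (p i y / q i))
      ((Real.log (p i x / q i) + 1) • p' i) x := fun i hi =>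
    (hasDerivAt_mul_log_div (hq i hi) (hpx i hi)).comp_hasFDerivAt x (hp i hi)
  have hmass : ∑ i ∈ s, p' i = 0 := sum_hasFDerivAt_eq_zero_of_eventually_sum_eq hp hsum
  refine (HasFDerivAt.fun_sum hterm).congr_fderiv ?_
  simp only [add_smul, one_smul, sum_add_distrib, hmass, add_zero]

theorem reverse_kl_gradient_general {s : Finset ι} {π : E → ι → ℝ} {θ₀ : E} {q : ι → ℝ} {c : ℝ}
    (hπpos : ∀ j ∈ s, 0 < π θ₀ j) (hπsum : ∀ᶠ θ in nhds θ₀, ∑ j ∈ s, π θ j = c)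
    (hπdiff : ∀ j ∈ s, DifferentiableAt ℝ (fun θ => π θ j) θ₀) (hqpos : ∀ j ∈ s, 0 < q j) :
    HasFDerivAt (fun θ => ∑ j ∈ s, π θ j * Real.log (π θ j / q j))
      (∑ j ∈ s, (π θ₀ j * Real.log (π θ₀ j / q j)) •
        fderiv ℝ (fun θ => Real.log (π θ j)) θ₀) θ₀ := by
  have hkl := hasFDerivAt_sum_mul_log_div (fun j hj => (hπdiff j hj).hasFDerivAt)
    (fun j hj => (hπpos j hj).ne') (fun j hj => (hqpos j hj).ne') hπsum
  refine hkl.congr_fderiv (sum_congr rfl fun j hj => ?_)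
  rw [mul_comm, mul_smul, smul_fderiv_log (hπdiff j hj) (hπpos j hj).ne']

end Divergence

/-- For a parameterized policy `π : ℝ^d → V → ℝ` (positive, summing
to one, differentiable at `θ₀`) and a strictly positive reference pmf `q`, the Fréchet
derivative at `θ₀` of the reverse KL `θ ↦ ∑_j π θ j · log(π θ j / q j)` equals
`∑_j π θ₀ j · log(π θ₀ j / q j) · D_θ(log π θ j)|_{θ₀}`. -/
theorem reverse_kl_gradient
    {V : Type*} [Fintype V] [Nonempty V] (d : ℕ)
    (π : (Fin d → ℝ) → V → ℝ) (θ₀ : Fin d → ℝ)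
    (hπpos : ∀ θ j, 0 < π θ j) (hπsum : ∀ θ, ∑ j, π θ j = 1)
    (hπdiff : ∀ j, DifferentiableAt ℝ (fun θ => π θ j) θ₀)
    (q : V → ℝ) (hqpos : ∀ j, 0 < q j) (hqsum : ∑ j, q j = 1) :
    fderiv ℝ (fun θ => ∑ j, π θ j * Real.log (π θ j / q j)) θ₀
      = ∑ j, (π θ₀ j * Real.log (π θ₀ j / q j)) •
          fderiv ℝ (fun θ => Real.log (π θ j)) θ₀ :=
  (reverse_kl_gradient_general (fun j _ => hπpos θ₀ j) (.of_forall hπsum)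
    (fun j _ => hπdiff j) (fun j _ => hqpos j)).fderiv
end

section
/- Let V be a nonempty finite type, π : ℝ^d → V → ℝ a parameterized policy (π θ j > 0, ∑_j π θ j = 1, each θ ↦ π θ j differentiable at θ₀), q : V → ℝ with q j > 0 and ∑_j q j = 1, f : ℝ → ℝ differentiable on (0, ∞), and S an arbitrary subset (Finset) of V. Write t_j(θ) := π θ j / q j. Then the Fréchet derivative at θ₀ of the f-divergence θ ↦ ∑_{j∈V} q j · f(t_j(θ)) equals the Fréchet derivative at θ₀ of the truncated term θ ↦ ∑_{j∈S} q j · f(t_j(θ)), plus the tail term ∑_{j∉S} π θ₀ j · f′(t_j(θ₀)) · D_θ(log(π θ j))|_{θ₀}. -/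
open Finset

/-! In `c * f (p / c)` the factors `c` and `1 / c` cancel on differentiation, leaving
`f' (p / c) • Dp`, and the log-derivative trick `Dp = p • D(log p)` puts this in score form. The
decomposition is then the splitting of the sum of these derivatives over kept and discarded
indices. -/

theorem hasDerivAt_const_mul_comp_div {𝕜 : Type*} [NontriviallyNormedField 𝕜]
    {f : 𝕜 → 𝕜} {f' c x : 𝕜} (hc : c ≠ 0) (hf : HasDerivAt f f' (x / c)) :
    HasDerivAt (fun y => c * f (y / c)) f' x := by
  have hcomp : HasDerivAt (fun y => f (y / c)) (f' * (1 / c)) x :=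
    hf.comp x ((hasDerivAt_id x).div_const c)
  have hcancel : c * (f' * (1 / c)) = f' := by field_simp
  exact hcancel ▸ hcomp.const_mul c

section NormedSpace

variable {E : Type*} [NormedAddCommGroup E] [NormedSpace ℝ E]

theorem smul_fderiv_log_s14 {p : E → ℝ} {θ₀ : E}
    (hp : DifferentiableAt ℝ p θ₀) (hp₀ : p θ₀ ≠ 0) :
    p θ₀ • fderiv ℝ (fun θ => Real.log (p θ)) θ₀ = fderiv ℝ p θ₀ := by
  rw [fderiv.log hp hp₀, smul_inv_smul₀ hp₀]

theorem hasFDerivAt_const_mul_comp_div_smul_fderiv_log {p : E → ℝ} {θ₀ : E} {f : ℝ → ℝ} {f' c : ℝ}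
    (hp : DifferentiableAt ℝ p θ₀) (hp₀ : p θ₀ ≠ 0) (hc : c ≠ 0)
    (hf : HasDerivAt f f' (p θ₀ / c)) :
    HasFDerivAt (fun θ => c * f (p θ / c))
      ((p θ₀ * f') • fderiv ℝ (fun θ => Real.log (p θ)) θ₀) θ₀ := by
  rw [mul_comm, mul_smul, smul_fderiv_log_s14 hp hp₀]
  exact (hasDerivAt_const_mul_comp_div hc hf).comp_hasFDerivAt θ₀ hp.hasFDerivAt

theorem topk_f_divergence_gradient_decomposition_general
    {V : Type*} [DecidableEq V] {p : E → V → ℝ} {θ₀ : E} {q : V → ℝ} {f f' : ℝ → ℝ}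
    {S T : Finset V} (hST : S ⊆ T)
    (hp : ∀ j ∈ T, DifferentiableAt ℝ (fun θ => p θ j) θ₀)
    (hp₀ : ∀ j ∈ T, p θ₀ j ≠ 0) (hq : ∀ j ∈ T, q j ≠ 0)
    (hf : ∀ j ∈ T, HasDerivAt f (f' (p θ₀ j / q j)) (p θ₀ j / q j)) :
    fderiv ℝ (fun θ => ∑ j ∈ T, q j * f (p θ j / q j)) θ₀
      = fderiv ℝ (fun θ => ∑ j ∈ S, q j * f (p θ j / q j)) θ₀
        + ∑ j ∈ T \ S, (p θ₀ j * f' (p θ₀ j / q j)) •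
            fderiv ℝ (fun θ => Real.log (p θ j)) θ₀ := by
  have hterm : ∀ j ∈ T, HasFDerivAt (fun θ => q j * f (p θ j / q j))
      ((p θ₀ j * f' (p θ₀ j / q j)) • fderiv ℝ (fun θ => Real.log (p θ j)) θ₀) θ₀ :=
    fun j hj => hasFDerivAt_const_mul_comp_div_smul_fderiv_log
      (hp j hj) (hp₀ j hj) (hq j hj) (hf j hj)
  have hkept := HasFDerivAt.fun_sum fun j hj => hterm j (hST hj)
  rw [(HasFDerivAt.fun_sum hterm).fderiv, hkept.fderiv, add_comm, sum_sdiff hST]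

end NormedSpace

/-- For a parameterized policy `π` (positive, summing to one,
differentiable at `θ₀`), a strictly positive reference pmf `q`, `f : ℝ → ℝ`
differentiable on `(0, ∞)` with derivative `f'`, and an arbitrary `Finset S ⊆ V`,
writing `t_j(θ) = π θ j / q j`, the Fréchet derivative at `θ₀` of the `f`-divergence
`θ ↦ ∑_{j∈V} q j · f(t_j(θ))` equals the Fréchet derivative at `θ₀` of the truncated
term `θ ↦ ∑_{j∈S} q j · f(t_j(θ))` plus the tail term
`∑_{j∉S} π θ₀ j · f'(t_j(θ₀)) · D_θ(log π θ j)|_{θ₀}`. -/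
theorem topk_f_divergence_gradient_decomposition
    {V : Type*} [Fintype V] [Nonempty V] [DecidableEq V] (d : ℕ)
    (π : (Fin d → ℝ) → V → ℝ) (θ₀ : Fin d → ℝ)
    (hπpos : ∀ θ j, 0 < π θ j) (hπsum : ∀ θ, ∑ j, π θ j = 1)
    (hπdiff : ∀ j, DifferentiableAt ℝ (fun θ => π θ j) θ₀)
    (q : V → ℝ) (hqpos : ∀ j, 0 < q j) (hqsum : ∑ j, q j = 1)
    (f f' : ℝ → ℝ) (hf : ∀ x : ℝ, 0 < x → HasDerivAt f (f' x) x)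
    (S : Finset V) :
    fderiv ℝ (fun θ => ∑ j, q j * f (π θ j / q j)) θ₀
      = fderiv ℝ (fun θ => ∑ j ∈ S, q j * f (π θ j / q j)) θ₀
        + ∑ j ∈ Sᶜ, (π θ₀ j * f' (π θ₀ j / q j)) •
            fderiv ℝ (fun θ => Real.log (π θ j)) θ₀ := by
  rw [compl_eq_univ_sdiff]
  exact topk_f_divergence_gradient_decomposition_general (subset_univ S) (fun j _ => hπdiff j)
    (fun j _ => (hπpos θ₀ j).ne') (fun j _ => (hqpos j).ne')
    (fun j _ => hf _ (div_pos (hπpos θ₀ j) (hqpos j)))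
end

section
/- Let Y be a nonempty finite type, π_ref : Y → ℝ with π_ref y > 0 and ∑_y π_ref y = 1, R : Y → ℝ, and β > 0. Suppose Z* ∈ ℝ satisfies Z* > max_y R y and the normalization condition ∑_y π_ref y / (Z* − R y) = 1/β. Define π_f*(y) := β · π_ref y / (Z* − R y). Then π_f* is a strictly positive probability mass function, and for every π : Y → ℝ with π y > 0 for all y and ∑_y π y = 1, the forward-KL-regularized objective J_f(π) := ∑_y π y · R y + β · ∑_y π_ref y · log(π y) satisfies J_f(π) ≤ J_f(π_f*), with equality if and only if π = π_f*. -/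
open Finset

/-! On `∑ y, p y = 1` the objective differs by the constant `Z` from
`∑ y, (β * πref y * log (p y) - (Z - R y) * p y)`, where the constraint has been absorbed by the
multiplier `Z`. This sum is maximised coordinatewise: for `s > 0`, the function
`x ↦ a * log x - s * x` has its unique maximum at `x = a / s`. -/

theorem mul_log_sub_mul_lt {a s x : ℝ} (ha : 0 ≤ a) (hs : 0 < s) (hx : 0 ≤ x)
    (hax : 0 < a → 0 < x) (hne : x ≠ a / s) :
    a * Real.log x - s * x < a * Real.log (a / s) - s * (a / s) := by
  rcases ha.eq_or_lt with rfl | ha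
  · have hx' : 0 < x := hx.lt_of_ne' (by simpa only [zero_div] using hne)
    simpa using mul_pos hs hx'
  · have hx' : 0 < x := hax ha
    have hm : 0 < a / s := div_pos ha hs
    have hlog : Real.log x - Real.log (a / s) < x / (a / s) - 1 := by
      rw [← Real.log_div hx'.ne' hm.ne']
      exact Real.log_lt_sub_one_of_pos (div_pos hx' hm) (mt (div_eq_one_iff_eq hm.ne').mp hne)
    have hscale : a * (x / (a / s) - 1) = s * x - s * (a / s) := by
      field_simp
    linarith [mul_lt_mul_of_pos_left hlog ha]

theorem mul_log_sub_mul_le {a s x : ℝ} (ha : 0 ≤ a) (hs : 0 < s) (hx : 0 ≤ x)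
    (hax : 0 < a → 0 < x) :
    a * Real.log x - s * x ≤ a * Real.log (a / s) - s * (a / s) := by
  rcases eq_or_ne x (a / s) with rfl | hne
  · exact le_rfl
  · exact (mul_log_sub_mul_lt ha hs hx hax hne).le

section ForwardKL

variable {Y : Type*}

/-- The candidate optimal policy `π_f*` for the multiplier `Z`. -/
noncomputable def forwardKLPolicy (πref R : Y → ℝ) (β Z : ℝ) (y : Y) : ℝ :=
  β * πref y / (Z - R y)

variable {πref R p : Y → ℝ} {β Z : ℝ}

theorem forwardKLPolicy_nonneg (href : ∀ y, 0 ≤ πref y) (hβ : 0 ≤ β) (hZ : ∀ y, R y ≤ Z) (y : Y) :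
    0 ≤ forwardKLPolicy πref R β Z y :=
  div_nonneg (mul_nonneg hβ (href y)) (sub_nonneg.mpr (hZ y))

theorem forwardKLPolicy_pos {y : Y} (href : 0 < πref y) (hβ : 0 < β) (hZ : R y < Z) :
    0 < forwardKLPolicy πref R β Z y :=
  div_pos (mul_pos hβ href) (sub_pos.mpr hZ)

variable [Fintype Y]

/-- The objective `J_f`, which is the expected reward minus `β * KL(πref ‖ p)`, plus the term
`β * ∑ y, πref y * log (πref y)` that does not depend on `p`. Since `Real.log 0 = 0`, this is
faithful only when `p` is positive wherever `πref` is. -/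
noncomputable def forwardKLObjective (πref R : Y → ℝ) (β : ℝ) (p : Y → ℝ) : ℝ :=
  ∑ y, p y * R y + β * ∑ y, πref y * Real.log (p y)

theorem sum_forwardKLPolicy (hβ : β ≠ 0) (hnorm : ∑ y, πref y / (Z - R y) = 1 / β) :
    ∑ y, forwardKLPolicy πref R β Z y = 1 := by
  simp only [forwardKLPolicy, mul_div_assoc]
  rw [← mul_sum, hnorm, mul_one_div_cancel hβ]

theorem forwardKLObjective_eq_lagrangian (πref R : Y → ℝ) (β Z : ℝ) (p : Y → ℝ) :
    forwardKLObjective πref R β p =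
      Z * ∑ y, p y + ∑ y, (β * πref y * Real.log (p y) - (Z - R y) * p y) := by
  simp only [forwardKLObjective, mul_sum, ← sum_add_distrib]
  exact sum_congr rfl fun y _ => by ring

theorem forwardKLObjective_lt_policy (href : ∀ y, 0 ≤ πref y) (hβ : 0 < β) (hZ : ∀ y, R y < Z)
    (hp : ∀ y, 0 ≤ p y) (hsupp : ∀ y, 0 < πref y → 0 < p y)
    (hsum : ∑ y, p y = ∑ y, forwardKLPolicy πref R β Z y) (hne : p ≠ forwardKLPolicy πref R β Z) :
    forwardKLObjective πref R β p <
      forwardKLObjective πref R β (forwardKLPolicy πref R β Z) := by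
  have hweight : ∀ y, 0 ≤ β * πref y := fun y => mul_nonneg hβ.le (href y)
  have hslope : ∀ y, 0 < Z - R y := fun y => sub_pos.mpr (hZ y)
  have hpos : ∀ y, 0 < β * πref y → 0 < p y := fun y h => hsupp y (pos_of_mul_pos_right h hβ.le)
  obtain ⟨y₀, hy₀⟩ := Function.ne_iff.mp hne
  rw [forwardKLObjective_eq_lagrangian πref R β Z p, forwardKLObjective_eq_lagrangian πref R β Z,
    hsum]
  gcongr 1
  exact sum_lt_sum
    (fun y _ => mul_log_sub_mul_le (hweight y) (hslope y) (hp y) (hpos y))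
    ⟨y₀, mem_univ y₀, mul_log_sub_mul_lt (hweight y₀) (hslope y₀) (hp y₀) (hpos y₀) hy₀⟩

end ForwardKL

theorem optimal_policy_forward_kl_general
    {Y : Type*} [Fintype Y]
    (πref : Y → ℝ) (href : ∀ y, 0 ≤ πref y)
    (R : Y → ℝ) (β : ℝ) (hβ : 0 < β)
    (Zstar : ℝ) (hZgt : ∀ y, R y < Zstar)
    (hZnorm : ∑ y, πref y / (Zstar - R y) = 1 / β)
    (πf : Y → ℝ) (hπf : ∀ y, πf y = β * πref y / (Zstar - R y))
    (Jf : (Y → ℝ) → ℝ)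
    (hJf : ∀ p : Y → ℝ,
      Jf p = ∑ y, p y * R y + β * ∑ y, πref y * Real.log (p y)) :
    (∀ y, 0 ≤ πf y) ∧ (∀ y, 0 < πref y → 0 < πf y) ∧ (∑ y, πf y = 1) ∧
      ∀ p : Y → ℝ, (∀ y, 0 ≤ p y) → (∀ y, 0 < πref y → 0 < p y) → (∑ y, p y = 1) →
        Jf p ≤ Jf πf ∧ (Jf p = Jf πf ↔ p = πf) := by
  obtain rfl : πf = forwardKLPolicy πref R β Zstar := funext hπf
  obtain rfl : Jf = forwardKLObjective πref R β := funext hJf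
  have hsum := sum_forwardKLPolicy hβ.ne' hZnorm
  refine ⟨forwardKLPolicy_nonneg href hβ.le fun y => (hZgt y).le,
    fun y hy => forwardKLPolicy_pos hy hβ (hZgt y), hsum, fun p hp hsupp hpsum => ?_⟩
  have hlt := forwardKLObjective_lt_policy href hβ hZgt hp hsupp (hpsum.trans hsum.symm)
  refine ⟨?_, fun heq => ?_, congrArg _⟩
  · rcases eq_or_ne p (forwardKLPolicy πref R β Zstar) with rfl | hne
    · exact le_rfl
    · exact (hlt hne).le
  · by_contra hne
    exact (hlt hne).ne heq

/-- For a strictly positive reference pmf `π_ref` on a nonempty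
finite type `Y`, a reward `R`, and `β > 0`, suppose `Z*` satisfies `Z* > max_y R y`
and `∑_y π_ref y / (Z* − R y) = 1/β`. Define `π_f*(y) = β · π_ref y / (Z* − R y)`.
Then `π_f*` is a strictly positive pmf, and for every strictly positive pmf `π`, the
forward-KL-regularized objective `J_f(π) = ∑_y π y · R y + β · ∑_y π_ref y · log(π y)`
satisfies `J_f(π) ≤ J_f(π_f*)`, with equality iff `π = π_f*`. -/
theorem optimal_policy_forward_kl
    {Y : Type*} [Fintype Y] [Nonempty Y]
    (πref : Y → ℝ) (hrefpos : ∀ y, 0 < πref y) (hrefsum : ∑ y, πref y = 1)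
    (R : Y → ℝ) (β : ℝ) (hβ : 0 < β)
    (Zstar : ℝ) (hZgt : ∀ y, R y < Zstar)
    (hZnorm : ∑ y, πref y / (Zstar - R y) = 1 / β)
    (πf : Y → ℝ) (hπf : ∀ y, πf y = β * πref y / (Zstar - R y))
    (Jf : (Y → ℝ) → ℝ)
    (hJf : ∀ p : Y → ℝ,
      Jf p = ∑ y, p y * R y + β * ∑ y, πref y * Real.log (p y)) :
    (∀ y, 0 < πf y) ∧ (∑ y, πf y = 1) ∧
      ∀ p : Y → ℝ, (∀ y, 0 < p y) → (∑ y, p y = 1) →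
        Jf p ≤ Jf πf ∧ (Jf p = Jf πf ↔ p = πf) := by
  obtain ⟨-, hpos, hsum, hmax⟩ := optimal_policy_forward_kl_general πref (fun y => (hrefpos y).le)
    R β hβ Zstar hZgt hZnorm πf hπf Jf hJf
  exact ⟨fun y => hpos y (hrefpos y), hsum, fun p hp => hmax p (fun y => (hp y).le) fun y _ => hp y⟩
end
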